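/- arXiv:math/9905124 — 2 statements merged into one kernel-verified Lean document; each statement's English description precedes it below -/
import Mathlib

section
/- Let p̂, q̂ be sequences in (0,1/2] and F a nonprincipal filter on ω which is nonmeasurable with respect to both μ_p̂ and μ_q̂. Define r_n = min(p_n, q_n). Then F is μ_r̂-nonmeasurable. -/
open MeasureTheory Filter Set
open scoped ENNReal

/-- `μ` is the product (Bernoulli) measure on `Bool^ι` determined by the sequence `p`:
a probability measure giving each cylinder set its natural product value. -/
def IsBernoulli {ι : Type*} (μ : Measure (ι → Bool)) (p : ι → ℝ≥0∞) : Prop :=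
  IsProbabilityMeasure μ ∧
    ∀ (s : Finset ι) (f : ι → Bool),
      μ {x | ∀ i ∈ s, x i = f i} = ∏ i ∈ s, (if f i then p i else 1 - p i)

/-- The subset of `2^ω` corresponding to a filter on `ω`, via characteristic functions. -/
def filterSet (F : Filter ℕ) : Set (ℕ → Bool) := {x | {n | x n = true} ∈ F}

/-!
A nonprincipal filter is a tail set, so if it is `μ_r`-measurable then the zero-one law makes it
`μ_r`-null or `μ_r`-conull. If it is conull, a `μ_r`-random set is the intersection of a
`μ_p`-random set with an independent random set, and upward closure makes the filter `μ_p`-conull.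
If it is null, a `μ_r`-random set agrees with a `μ_p`-random set where `p ≤ q` and with an
independent `μ_q`-random set elsewhere; it then contains their intersection, so Fubini and closure
under intersections make the filter null for `μ_p` or for `μ_q`.
-/

section ProductMeasure

variable {ι : Type*} {X : ι → Type*}

/-- Tail sets in a product: the sets of sequences invariant under changing finitely many
coordinates. They are the events to which the zero-one law applies; only closure under such changes
is asked for, since agreement off a finite set is symmetric. -/
def IsTailSet (S : Set (∀ i, X i)) : Prop :=
  ∀ ⦃x y : ∀ i, X i⦄, (∀ᶠ i in cofinite, x i = y i) → x ∈ S → y ∈ S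

theorem IsTailSet.mem_iff {S : Set (∀ i, X i)} (hS : IsTailSet S) {x y : ∀ i, X i}
    (hxy : ∀ᶠ i in cofinite, x i = y i) : x ∈ S ↔ y ∈ S :=
  ⟨hS hxy, hS (hxy.mono fun _ => Eq.symm)⟩

theorem IsTailSet.piecewise_mem_iff {S : Set (∀ i, X i)} (hS : IsTailSet S) {A : Set ι}
    [DecidablePred (· ∈ A)] (hA : A.Finite) {x y : ∀ i, X i} :
    A.piecewise x y ∈ S ↔ y ∈ S :=
  hS.mem_iff <| hA.eventually_cofinite_notMem.mono fun _ hi => A.piecewise_eq_of_notMem x y hi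

variable [∀ i, MeasurableSpace (X i)]

theorem measurable_piecewise_prod (A : Set ι) [DecidablePred (· ∈ A)] :
    Measurable fun z : (∀ i, X i) × (∀ i, X i) => A.piecewise z.1 z.2 := by
  refine measurable_pi_lambda _ fun i => ?_
  by_cases hi : i ∈ A <;> simp only [Set.piecewise, hi, if_true, if_false] <;> fun_prop

variable (m n : ∀ i, Measure (X i)) [∀ i, IsProbabilityMeasure (m i)]
  [∀ i, IsProbabilityMeasure (n i)]

theorem measurePreserving_piecewise_infinitePi (A : Set ι) [DecidablePred (· ∈ A)] :
    MeasurePreserving (fun z : (∀ i, X i) × (∀ i, X i) => A.piecewise z.1 z.2)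
      ((Measure.infinitePi m).prod (Measure.infinitePi n))
      (Measure.infinitePi (A.piecewise m n)) := by
  have (i : ι) : IsProbabilityMeasure (A.piecewise m n i) := by
    by_cases hi : i ∈ A <;> simp only [Set.piecewise, hi, if_true, if_false] <;> infer_instance
  refine ⟨measurable_piecewise_prod A, Measure.eq_infinitePi _ fun s t ht => ?_⟩
  have preimage_box : (fun z : (∀ i, X i) × (∀ i, X i) => A.piecewise z.1 z.2) ⁻¹'
      (s : Set ι).pi t = (s.filter (· ∈ A) : Set ι).pi t ×ˢ (s.filter (· ∉ A) : Set ι).pi t := by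
    ext z
    simp only [mem_preimage, mem_prod, Set.mem_pi, Finset.mem_coe, Finset.mem_filter,
      Set.piecewise]
    grind
  rw [Measure.map_apply (measurable_piecewise_prod A)
      (.pi s.countable_toSet fun i _ => ht i), preimage_box, Measure.prod_prod,
    Measure.infinitePi_pi m fun i _ => ht i, Measure.infinitePi_pi n fun i _ => ht i,
    ← Finset.prod_ite]
  refine Finset.prod_congr rfl fun i _ => ?_
  split_ifs with hi
  · rw [Set.piecewise_eq_of_mem _ _ _ hi]
  · rw [Set.piecewise_eq_of_notMem _ _ _ hi]

variable {m n}

theorem IsTailSet.infinitePi_inter_pi {S : Set (∀ i, X i)} (hS : IsTailSet S)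
    (hSm : NullMeasurableSet S (Measure.infinitePi m)) (s : Finset ι) {t : ∀ i, Set (X i)}
    (ht : ∀ i, MeasurableSet (t i)) :
    Measure.infinitePi m (S ∩ (s : Set ι).pi t) =
      Measure.infinitePi m S * ∏ i ∈ s, m i (t i) := by
  classical
  have hT := measurePreserving_piecewise_infinitePi m m (s : Set ι)
  rw [Set.piecewise_same] at hT
  have ht_pi : MeasurableSet ((s : Set ι).pi t) := .pi s.countable_toSet fun i _ => ht i
  have preimage_inter : (fun z : (∀ i, X i) × (∀ i, X i) => (s : Set ι).piecewise z.1 z.2) ⁻¹'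
      (S ∩ (s : Set ι).pi t) = (s : Set ι).pi t ×ˢ S := by
    ext z
    simp only [mem_preimage, mem_inter_iff, mem_prod, hS.piecewise_mem_iff s.finite_toSet,
      Set.mem_pi]
    rw [and_comm]
    refine and_congr_left fun _ => forall₂_congr fun i hi => ?_
    rw [Set.piecewise_eq_of_mem _ _ _ hi]
  rw [← hT.measure_preimage (hSm.inter ht_pi.nullMeasurableSet), preimage_inter,
    Measure.prod_prod, Measure.infinitePi_pi m fun i _ => ht i, mul_comm]

theorem IsTailSet.ae_mem_or_ae_notMem {S : Set (∀ i, X i)} (hS : IsTailSet S)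
    (hSm : NullMeasurableSet S (Measure.infinitePi m)) :
    (∀ᵐ x ∂Measure.infinitePi m, x ∈ S) ∨ ∀ᵐ x ∂Measure.infinitePi m, x ∉ S := by
  rw [← measure_eq_zero_iff_ae_notMem, or_iff_not_imp_right]
  intro hS0
  have hS_top := measure_ne_top (Measure.infinitePi m) S
  -- Conditioning on a tail set does not change the measure of boxes, hence changes nothing.
  have cond_eq : ProbabilityTheory.cond (Measure.infinitePi m) S = Measure.infinitePi m := by
    refine Measure.eq_infinitePi m fun s t ht => ?_
    rw [ProbabilityTheory.cond_apply' (.pi s.countable_toSet fun i _ => ht i),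
      hS.infinitePi_inter_pi hSm s ht, ← mul_assoc, ENNReal.inv_mul_cancel hS0 hS_top, one_mul]
  have measure_eq_one : Measure.infinitePi m S = 1 := by
    simpa only [cond_eq] using ProbabilityTheory.cond_apply_self hS0 hS_top
  exact (mem_ae_iff_prob_eq_one₀ hSm).2 measure_eq_one

theorem ae_notMem_or_ae_notMem_of_piecewise [∀ i, SemilatticeInf (X i)] {S : Set (∀ i, X i)}
    (hS : IsUpperSet S) (hS_inf : InfClosed S) (A : Set ι) [DecidablePred (· ∈ A)]
    (h : ∀ᵐ x ∂Measure.infinitePi (A.piecewise m n), x ∉ S) :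
    (∀ᵐ x ∂Measure.infinitePi m, x ∉ S) ∨ ∀ᵐ x ∂Measure.infinitePi n, x ∉ S := by
  have hT := measurePreserving_piecewise_infinitePi m n A
  have h_sections := Measure.ae_ae_of_ae_prod (hT.quasiMeasurePreserving.ae h)
  by_contra! hmn
  obtain ⟨x, hx, hxy⟩ := (hmn.1.and_eventually h_sections).exists
  obtain ⟨y, hy, hxy⟩ := (hmn.2.and_eventually hxy).exists
  have inf_le : x ⊓ y ≤ A.piecewise x y :=
    Set.le_piecewise (fun _ _ => inf_le_left) fun _ _ => inf_le_right
  exact hxy (hS inf_le (hS_inf hx hy))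

end ProductMeasure

section Bernoulli

variable {ι : Type*}

theorem measurableSet_forall_true (s : Finset ι) :
    MeasurableSet {x : ι → Bool | ∀ i ∈ s, x i = true} := by
  simp only [ofPred_forall]
  exact s.measurableSet_biInter fun i _ =>
    measurableSet_eq_fun (measurable_pi_apply i) measurable_const

theorem generateFrom_forall_true :
    MeasurableSpace.generateFrom
      (range fun s : Finset ι => {x : ι → Bool | ∀ i ∈ s, x i = true}) = MeasurableSpace.pi := by
  apply le_antisymm
  · refine MeasurableSpace.generateFrom_le ?_
    rintro _ ⟨s, rfl⟩
    exact measurableSet_forall_true s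
  · refine iSup_le fun i => Measurable.comap_le (measurable_to_bool ?_)
    refine MeasurableSpace.measurableSet_generateFrom ⟨{i}, ?_⟩
    ext x
    simp

theorem isPiSystem_forall_true :
    IsPiSystem (range fun s : Finset ι => {x : ι → Bool | ∀ i ∈ s, x i = true}) := by
  classical
  rintro _ ⟨s, rfl⟩ _ ⟨t, rfl⟩ _
  refine ⟨s ∪ t, ?_⟩
  ext x
  simp only [Finset.mem_union, mem_ofPred_eq, mem_inter_iff]
  grind

theorem measure_ext_of_forall_true {μ ν : Measure (ι → Bool)} [IsFiniteMeasure μ]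
    (h : ∀ s : Finset ι, μ {x | ∀ i ∈ s, x i = true} = ν {x | ∀ i ∈ s, x i = true}) :
    μ = ν := by
  refine ext_of_generate_finite _ generateFrom_forall_true.symm isPiSystem_forall_true ?_
    (by simpa using h ∅)
  rintro _ ⟨s, rfl⟩
  exact h s

/-- The law on `Bool` of a coin with success probability `p`, the factor of a Bernoulli product
measure. It is a probability measure only for `p ≤ 1`; keeping `p` in `ℝ≥0∞` matches
`IsBernoulli`. -/
noncomputable def coinMeasure (p : ℝ≥0∞) : Measure Bool :=
  p • Measure.dirac true + (1 - p) • Measure.dirac false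

theorem isProbabilityMeasure_coinMeasure {p : ℝ≥0∞} (hp : p ≤ 1) :
    IsProbabilityMeasure (coinMeasure p) :=
  ⟨by simp [coinMeasure, add_tsub_cancel_of_le hp]⟩

theorem coinMeasure_singleton (p : ℝ≥0∞) (b : Bool) :
    coinMeasure p {b} = if b then p else 1 - p := by
  cases b <;> simp [coinMeasure]

theorem isBernoulli_infinitePi_coinMeasure {p : ι → ℝ≥0∞} (hp : ∀ i, p i ≤ 1) :
    IsBernoulli (Measure.infinitePi fun i => coinMeasure (p i)) p := by
  have (i : ι) := isProbabilityMeasure_coinMeasure (hp i)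
  refine ⟨inferInstance, fun s f => ?_⟩
  simpa only [coinMeasure_singleton, Set.pi, Finset.mem_coe, mem_singleton_iff] using
    Measure.infinitePi_pi (fun i => coinMeasure (p i)) (s := s) (t := fun i => {f i})
      fun i _ => measurableSet_singleton (f i)

variable {μ ν ρ : Measure (ι → Bool)} {p q r : ι → ℝ≥0∞} {S : Set (ι → Bool)}

namespace IsBernoulli

theorem apply_forall_true (hμ : IsBernoulli μ p) (s : Finset ι) :
    μ {x | ∀ i ∈ s, x i = true} = ∏ i ∈ s, p i := by
  simpa using hμ.2 s fun _ => true

theorem le_one (hμ : IsBernoulli μ p) (i : ι) : p i ≤ 1 := by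
  have := hμ.1
  calc
    p i = μ {x | ∀ j ∈ ({i} : Finset ι), x j = true} := by
      rw [hμ.apply_forall_true, Finset.prod_singleton]
    _ ≤ 1 := prob_le_one

theorem eq_infinitePi (hμ : IsBernoulli μ p) :
    μ = Measure.infinitePi fun i => coinMeasure (p i) := by
  have := hμ.1
  refine measure_ext_of_forall_true fun s => ?_
  rw [hμ.apply_forall_true, (isBernoulli_infinitePi_coinMeasure hμ.le_one).apply_forall_true]

theorem ae_mem_or_ae_notMem (hμ : IsBernoulli μ p) (hS : IsTailSet S)
    (hSm : NullMeasurableSet S μ) : (∀ᵐ x ∂μ, x ∈ S) ∨ ∀ᵐ x ∂μ, x ∉ S := by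
  have (i : ι) := isProbabilityMeasure_coinMeasure (hμ.le_one i)
  rw [hμ.eq_infinitePi] at hSm ⊢
  exact hS.ae_mem_or_ae_notMem hSm

theorem ae_notMem_or_ae_notMem_of_min (hμ : IsBernoulli μ p) (hν : IsBernoulli ν q)
    (hρ : IsBernoulli ρ fun i => min (p i) (q i)) (hS : IsUpperSet S) (hS_inf : InfClosed S)
    (h : ∀ᵐ x ∂ρ, x ∉ S) : (∀ᵐ x ∂μ, x ∉ S) ∨ ∀ᵐ x ∂ν, x ∉ S := by
  classical
  have (i : ι) := isProbabilityMeasure_coinMeasure (hμ.le_one i)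
  have (i : ι) := isProbabilityMeasure_coinMeasure (hν.le_one i)
  have coin_min : (fun i => coinMeasure (min (p i) (q i))) =
      {i | p i ≤ q i}.piecewise (fun i => coinMeasure (p i)) fun i => coinMeasure (q i) := by
    ext1 i
    simp only [min_def, Set.piecewise, mem_ofPred_eq, apply_ite coinMeasure]
  rw [hρ.eq_infinitePi, coin_min] at h
  rw [hμ.eq_infinitePi, hν.eq_infinitePi]
  exact ae_notMem_or_ae_notMem_of_piecewise hS hS_inf _ h

theorem measurePreserving_inf (hμ : IsBernoulli μ p) (hν : IsBernoulli ν q)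
    (hρ : IsBernoulli ρ (p * q)) :
    MeasurePreserving (fun z : (ι → Bool) × (ι → Bool) => z.1 ⊓ z.2) (μ.prod ν) ρ := by
  have := hμ.1
  have := hν.1
  have hmeas : Measurable fun z : (ι → Bool) × (ι → Bool) => z.1 ⊓ z.2 :=
    measurable_pi_lambda _ fun i =>
      (Measurable.of_discrete (f := fun b : Bool × Bool => b.1 ⊓ b.2)).comp
        (f := fun z : (ι → Bool) × (ι → Bool) => (z.1 i, z.2 i)) (by fun_prop)
  refine ⟨hmeas, measure_ext_of_forall_true fun s => ?_⟩
  have preimage_forall_true : (fun z : (ι → Bool) × (ι → Bool) => z.1 ⊓ z.2) ⁻¹'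
      {x | ∀ i ∈ s, x i = true} = {x | ∀ i ∈ s, x i = true} ×ˢ {x | ∀ i ∈ s, x i = true} := by
    ext z
    simp only [mem_preimage, mem_ofPred_eq, mem_prod, Pi.inf_apply, Bool.min_eq_and,
      Bool.and_eq_true, forall₂_and]
  rw [Measure.map_apply hmeas (measurableSet_forall_true s), preimage_forall_true,
    Measure.prod_prod, hμ.apply_forall_true, hν.apply_forall_true, hρ.apply_forall_true]
  simp only [Pi.mul_apply, Finset.prod_mul_distrib]

theorem ae_mem_of_le (hμ : IsBernoulli μ p) (hρ : IsBernoulli ρ r) (hrp : r ≤ p)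
    (hS : IsUpperSet S) (h : ∀ᵐ x ∂ρ, x ∈ S) : ∀ᵐ x ∂μ, x ∈ S := by
  -- Where `p` vanishes so does `r`, and the junk value `0 / 0 = 0` is a legitimate factor.
  have mul_div_eq : p * (r / p) = r := funext fun i =>
    ENNReal.mul_div_cancel' (fun hp0 => le_antisymm (hp0 ▸ hrp i) zero_le)
      fun hp_top => absurd hp_top (ne_top_of_le_ne_top ENNReal.one_ne_top (hμ.le_one i))
  have div_le_one (i : ι) : (r / p) i ≤ 1 :=
    ENNReal.div_le_of_le_mul (by simpa only [one_mul] using hrp i)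
  have hν := isBernoulli_infinitePi_coinMeasure div_le_one
  have := hν.1
  have hT := hμ.measurePreserving_inf hν (mul_div_eq.symm ▸ hρ)
  filter_upwards [Measure.ae_ae_of_ae_prod (hT.quasiMeasurePreserving.ae h)] with x hx
  obtain ⟨y, hxy⟩ := hx.exists
  exact hS inf_le_left hxy

end IsBernoulli

end Bernoulli

section Filter

variable {ι : Type*}

/-- A filter seen as a subset of the Cantor cube `2^ι`, via indicator functions of its members:
`filterSet` over an arbitrary index type. -/
def memberIndicators (F : Filter ι) : Set (ι → Bool) :=
  {x | ∀ᶠ i in F, x i = true}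

theorem isUpperSet_memberIndicators (F : Filter ι) : IsUpperSet (memberIndicators F) :=
  fun _ _ hxy hx => hx.mono fun i hi => hxy i hi

theorem infClosed_memberIndicators (F : Filter ι) : InfClosed (memberIndicators F) :=
  fun _ hx _ hy => (hx.and hy).mono fun _ hi => Bool.and_eq_true_iff.2 hi

theorem isTailSet_memberIndicators {F : Filter ι} (hF : F ≤ cofinite) :
    IsTailSet (memberIndicators F) :=
  fun _ _ hxy hx => (hx.and (hF hxy)).mono fun _ hi => hi.2 ▸ hi.1

end Filter

theorem nonmeasurable_min_general {ι : Type*} {p q : ι → ℝ≥0∞} {μp μq μr : Measure (ι → Bool)}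
    (hμp : IsBernoulli μp p) (hμq : IsBernoulli μq q)
    (hμr : IsBernoulli μr fun i => min (p i) (q i)) {F : Filter ι} (hF : F ≤ cofinite)
    (hp : ¬ NullMeasurableSet (memberIndicators F) μp) (hq : μq (memberIndicators F) ≠ 0) :
    ¬ NullMeasurableSet (memberIndicators F) μr := by
  intro hr
  have hF_up := isUpperSet_memberIndicators F
  rcases hμr.ae_mem_or_ae_notMem (isTailSet_memberIndicators hF) hr with h_conull | h_null
  · have hp_conull := hμp.ae_mem_of_le hμr (fun _ => min_le_left _ _) hF_up h_conull
    exact hp (NullMeasurableSet.of_null hp_conull).of_compl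
  · rcases hμp.ae_notMem_or_ae_notMem_of_min hμq hμr hF_up (infClosed_memberIndicators F)
      h_null with hp_null | hq_null
    · exact hp (.of_null (measure_eq_zero_iff_ae_notMem.2 hp_null))
    · exact hq (measure_eq_zero_iff_ae_notMem.2 hq_null)

theorem nonmeasurable_min (p q : ℕ → ℝ≥0∞)
    (hp : ∀ n, 0 < p n ∧ p n ≤ 1 / 2) (hq : ∀ n, 0 < q n ∧ q n ≤ 1 / 2)
    (μp μq μr : Measure (ℕ → Bool)) (hμp : IsBernoulli μp p) (hμq : IsBernoulli μq q)
    (hμr : IsBernoulli μr fun n => min (p n) (q n))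
    (F : Filter ℕ) [F.NeBot] (hF : F ≤ Filter.cofinite)
    (h1 : ¬ NullMeasurableSet (filterSet F) μp)
    (h2 : ¬ NullMeasurableSet (filterSet F) μq) :
    ¬ NullMeasurableSet (filterSet F) μr := by
  exact nonmeasurable_min_general hμp hμq hμr hF h1 fun hq_null => h2 (.of_null hq_null)
end

section
/- Every μ_p̂-measurable nonprincipal filter on ω extends to a μ_p̂-measurable filter which does not have the Baire property. -/
open MeasureTheory Filter Set
open scoped ENNReal

/-!
A measurable nonprincipal filter `F` is a null set: otherwise it has full measure by the zero-one
law, and since `p n ≤ 1 / 2` there are two disjoint random sets with the given distribution, which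
would both belong to `F`. A null filter is even a small set. Indeed a null set is covered infinitely
often by events each depending on two consecutive blocks of coordinates. If every member of `F` has
infinitely many large sections along the even blocks, the large sections form a small cover; if
some `g ∈ F` does not, the sections along `g` form one, because `F` is closed under intersections
with `g` and under supersets.

Given a small cover `U` of `F`, with blocks `f ⁻¹' {j}`, the sets
`A_X = {j | every superset of X belongs to U j}` for `X ∈ F` generate a filter compatible with
`atTop`; choose an ultrafilter `𝒰` containing it and put `G = F ⊓ comap f 𝒰`. Every member of `G`
belongs to `U j` for `𝒰`-almost all `j`, so `G` is null by Borel-Cantelli. If `G` were a Baire set,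
it would be meagre, and so would be its preimage under the open map `(a, z) ↦ a ∪ f ⁻¹' z`; but this
preimage contains `(a, z)` or `(a, zᶜ)` for all `a` and `z`, according to which of `z` and `zᶜ`
belongs to `𝒰`.
-/

open scoped Topology

/-! ### Filters and the Baire property -/

theorem isUpperSet_filterSet (F : Filter ℕ) : IsUpperSet (filterSet F) :=
  fun _ _ hxy hx => mem_of_superset hx fun i hi => hxy i hi

theorem inf_mem_filterSet {F : Filter ℕ} {x y : ℕ → Bool} (hx : x ∈ filterSet F)
    (hy : y ∈ filterSet F) : x ⊓ y ∈ filterSet F :=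
  mem_of_superset (inter_mem hx hy) fun i hi => by simpa using hi

theorem boolIndicator_mem_filterSet {F : Filter ℕ} {X : Set ℕ} :
    X.boolIndicator ∈ filterSet F ↔ X ∈ F := by
  simp [filterSet, ← mem_iff_boolIndicator]

theorem notMem_filterSet_of_finite {F : Filter ℕ} [F.NeBot] (hF : F ≤ cofinite) {x : ℕ → Bool}
    (hx : {i | x i = true}.Finite) : x ∉ filterSet F :=
  fun h => compl_notMem h (hF hx.compl_mem_cofinite)

theorem isOpen_setOf_eqOn {ι X : Type*} [TopologicalSpace X] [DiscreteTopology X] {S : Set ι}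
    (hS : S.Finite) (x : ι → X) : IsOpen {y | EqOn y x S} :=
  isOpen_set_pi (s := fun i => {x i}) hS fun _ _ => isOpen_discrete _

/-- The translation of the Cantor space by `e`, for the group structure `xor`. -/
def xorHomeomorph {ι : Type*} (e : ι → Bool) : (ι → Bool) ≃ₜ (ι → Bool) where
  toFun x i := xor (e i) (x i)
  invFun x i := xor (e i) (x i)
  left_inv x := by simp
  right_inv x := by simp
  continuous_toFun := continuous_pi fun i =>
    (continuous_of_discreteTopology (f := xor (e i))).comp (continuous_apply i)
  continuous_invFun := continuous_pi fun i =>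
    (continuous_of_discreteTopology (f := xor (e i))).comp (continuous_apply i)

theorem compl_filterSet_mem_residual {F : Filter ℕ} [F.NeBot] (hF : F ≤ cofinite)
    (hB : BaireMeasurableSet (filterSet F)) : (filterSet F)ᶜ ∈ residual (ℕ → Bool) := by
  obtain ⟨V, hV, hFV⟩ := hB.residualEq_isOpen
  rw [eventuallyEq_set] at hFV
  obtain rfl | ⟨x, hx⟩ := V.eq_empty_or_nonempty
  · filter_upwards [hFV] with y hy using by simpa using hy
  exfalso
  obtain ⟨_, ⟨z, N, rfl⟩, hxz, hzV⟩ :=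
    (PiNat.isTopologicalBasis_cylinders _).mem_nhds_iff.1 (hV.mem_nhds hx)
  let flip := xorHomeomorph fun i => decide (N ≤ i)
  have hflip := tendsto_residual_of_isOpenMap flip.continuous flip.isOpenMap hFV
  obtain ⟨y, hyz, hyF, hyF'⟩ := (dense_of_mem_residual (inter_mem hFV hflip)).inter_open_nonempty
    _ (PiNat.isOpen_cylinder _ z N) ⟨x, hxz⟩
  have hflip_mem : flip y ∈ PiNat.cylinder z N := fun i hi => by
    simpa [flip, xorHomeomorph, not_le.2 hi] using hyz i hi
  refine notMem_filterSet_of_finite hF ((finite_Iio N).subset fun i hi => ?_)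
    (inf_mem_filterSet (hyF.2 (hzV hyz)) (hyF'.2 (hzV hflip_mem)))
  by_contra hiN
  simp [flip, xorHomeomorph, notMem_Iio.1 hiN] at hi

/-- The map sending `(a, z)` to the union of `a` with the preimage of `z` under `f`. -/
def supComp {ι κ : Type*} (f : ι → κ) (q : (ι → Bool) × (κ → Bool)) : ι → Bool :=
  q.1 ⊔ q.2 ∘ f

theorem continuous_supComp {ι κ : Type*} (f : ι → κ) : Continuous (supComp f) :=
  continuous_pi fun i =>
    (continuous_of_discreteTopology (f := fun b : Bool × Bool => b.1 ⊔ b.2)).comp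
      (by fun_prop : Continuous fun q : (ι → Bool) × (κ → Bool) => (q.1 i, q.2 (f i)))

theorem isOpenMap_supComp {ι κ : Type*} {f : ι → κ} (hf : ∀ j, (f ⁻¹' {j}).Finite) :
    IsOpenMap (supComp f) := by
  classical
  refine IsOpenMap.of_sections fun ⟨a, z⟩ => ?_
  -- On the fibres where `x` agrees with `supComp f (a, z)` keep `(a, z)`, elsewhere take `(x, ∅)`.
  let agree (x : ι → Bool) (j : κ) : Prop := EqOn x (supComp f (a, z)) (f ⁻¹' {j})
  let g (x : ι → Bool) : (ι → Bool) × (κ → Bool) :=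
    (fun i => if agree x (f i) then a i else x i, fun j => if agree x j then z j else false)
  have hagree (j : κ) : ∀ᶠ x in 𝓝 (supComp f (a, z)), agree x j :=
    (isOpen_setOf_eqOn (hf j) _).mem_nhds fun _ _ => rfl
  have hg : g (supComp f (a, z)) = (a, z) := by simp [g, agree, EqOn]
  refine ⟨g, ContinuousAt.prodMk (continuousAt_pi.2 fun i => ?_) (continuousAt_pi.2 fun j => ?_),
    hg, fun x => funext fun i => ?_⟩
  · exact continuousAt_const.congr ((hagree (f i)).mono fun x hx => (if_pos hx).symm)
  · exact continuousAt_const.congr ((hagree j).mono fun x hx => (if_pos hx).symm)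
  · by_cases hx : agree x (f i)
    · simpa [g, supComp, hx] using (hx rfl).symm
    · simp [g, supComp, hx]

theorem not_baireMeasurableSet_filterSet {F : Filter ℕ} [F.NeBot] (hF : F ≤ cofinite)
    {κ : Type*} {f : ℕ → κ} (hf : ∀ j, (f ⁻¹' {j}).Finite) {U : Ultrafilter κ}
    (hU : Tendsto f F U) :
    ¬ BaireMeasurableSet (filterSet F) := fun hB => by
  have hres := tendsto_residual_of_isOpenMap (continuous_supComp f) (isOpenMap_supComp hf)
    (compl_filterSet_mem_residual hF hB)
  let flip := (Homeomorph.refl (ℕ → Bool)).prodCongr (xorHomeomorph fun _ : κ => true)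
  have hflip := tendsto_residual_of_isOpenMap flip.continuous flip.isOpenMap hres
  obtain ⟨⟨a, z⟩, haz, haz'⟩ := (dense_of_mem_residual (inter_mem hres hflip)).nonempty
  rcases U.mem_or_compl_mem {j | z j = true} with hz | hz
  · exact haz (mem_of_superset (hU hz) fun i hi => by
      simp [supComp, show z (f i) = true from hi])
  · exact haz' (mem_of_superset (hU hz) fun i hi => by
      simp [supComp, flip, xorHomeomorph, show z (f i) = false by simpa using hi])

/-! ### Small sets -/

theorem dependsOn_mem_iUnion {ι κ : Type*} {X : ι → Type*} {S : Set ι} {U : κ → Set (∀ i, X i)}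
    (hU : ∀ k, DependsOn (· ∈ U k) S) : DependsOn (· ∈ ⋃ k, U k) S := fun x y hxy => by
  simp only [mem_iUnion]
  exact propext (exists_congr fun k => (hU k hxy).to_iff)

/-- A small set in the sense of Bartoszyński, on the Cantor space: every point lies in infinitely
many of countably many sets of summable measure, the `j`-th of which depends only on the coordinates
in the `j`-th block of a partition of `ℕ` into finite blocks. The block of `i` is called `f i`. -/
def IsSmallSet (μ : Measure (ℕ → Bool)) (A : Set (ℕ → Bool)) : Prop :=
  ∃ (f : ℕ → ℕ) (U : ℕ → Set (ℕ → Bool)), (∀ j, (f ⁻¹' {j}).Finite) ∧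
    (∀ j, DependsOn (· ∈ U j) (f ⁻¹' {j})) ∧ ∑' j, μ (U j) ≠ ∞ ∧ ∀ x ∈ A, ∃ᶠ j in atTop, x ∈ U j

theorem isSmallSet_of_tendsto {μ : Measure (ℕ → Bool)} {A : Set (ℕ → Bool)} {f e : ℕ → ℕ}
    {U : ℕ → Set (ℕ → Bool)} (hf : ∀ j, (f ⁻¹' {j}).Finite) (he : Tendsto e atTop atTop)
    (hU : ∀ k, DependsOn (· ∈ U k) (f ⁻¹' {e k})) (hsum : ∑' k, μ (U k) ≠ ∞)
    (hA : ∀ x ∈ A, ∃ᶠ k in atTop, x ∈ U k) : IsSmallSet μ A := by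
  refine ⟨f, fun j => ⋃ k : e ⁻¹' {j}, U k, hf,
    fun j => dependsOn_mem_iUnion fun ⟨k, hk⟩ => hk ▸ hU k, ?_, fun x hx => ?_⟩
  · refine ne_top_of_le_ne_top hsum ?_
    calc ∑' j, μ (⋃ k : e ⁻¹' {j}, U k)
        ≤ ∑' (j) (k : e ⁻¹' {j}), μ (U k) := ENNReal.tsum_le_tsum fun j => measure_iUnion_le _
      _ = ∑' k, μ (U k) := ENNReal.tsum_fiberwise (fun k => μ (U k)) e
  · exact he.frequently ((hA x hx).mono fun k hk => mem_iUnion.2 ⟨⟨k, rfl⟩, hk⟩)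

theorem frequently_Ici_subset {ι κ : Type*} {A : Set (ι → Bool)} (hA : IsUpperSet A) {f : ι → κ}
    {U : κ → Set (ι → Bool)} (hU : ∀ j, DependsOn (· ∈ U j) (f ⁻¹' {j})) {l : Filter κ}
    (hAU : ∀ x ∈ A, ∃ᶠ j in l, x ∈ U j) {x : ι → Bool} (hx : x ∈ A) :
    ∃ᶠ j in l, Ici x ⊆ U j := by
  have hbad (j : κ) : ∃ y, x ≤ y ∧ (y ∈ U j → Ici x ⊆ U j) := by
    by_cases h : Ici x ⊆ U j
    · exact ⟨x, le_rfl, fun _ => h⟩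
    · obtain ⟨y, hxy, hy⟩ := not_subset.1 h
      exact ⟨y, hxy, fun h => absurd h hy⟩
  choose Y hxY hY using hbad
  -- As the blocks are disjoint, one point agrees with `Y j` on the `j`-th block for all `j`.
  refine (hAU (fun i => Y (f i) i) (hA (fun i => hxY (f i) i) hx)).mono fun j hj => hY j ?_
  exact (hU j fun i (hi : f i = j) => by rw [hi]).mp hj

/-- The filter generated by the index sets `A_X = {j | every superset of X belongs to U j}`, where
`X` ranges over the members of the filter `F`. -/
def traceFilter {ι κ : Type*} (F : Filter ι) (U : κ → Set (ι → Bool)) : Filter κ :=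
  F.lift' fun X => {j | Ici X.boolIndicator ⊆ U j}

theorem mem_traceFilter {ι κ : Type*} {F : Filter ι} {U : κ → Set (ι → Bool)} {J : Set κ} :
    J ∈ traceFilter F U ↔ ∃ X ∈ F, {j | Ici X.boolIndicator ⊆ U j} ⊆ J := by
  have hmono : Monotone (boolIndicator : Set ι → ι → Bool) := fun X Y hXY i hi =>
    (mem_iff_boolIndicator Y i).1 (hXY ((mem_iff_boolIndicator X i).2 hi))
  refine mem_lift'_sets fun X Y hXY j hj => ?_
  exact (Ici_subset_Ici.2 (hmono hXY)).trans hj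

theorem traceFilter_inf_neBot {F : Filter ℕ} {κ : Type*} {f : ℕ → κ} {U : κ → Set (ℕ → Bool)}
    (hU : ∀ j, DependsOn (· ∈ U j) (f ⁻¹' {j})) {l : Filter κ}
    (hFU : ∀ x ∈ filterSet F, ∃ᶠ j in l, x ∈ U j) : (traceFilter F U ⊓ l).NeBot := by
  refine inf_neBot_iff_frequently_left.2 fun {p} hp => ?_
  obtain ⟨X, hX, hXp⟩ := mem_traceFilter.1 hp
  exact (frequently_Ici_subset (isUpperSet_filterSet F) hU hFU
    (boolIndicator_mem_filterSet.2 hX)).mono hXp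

theorem eventually_mem_of_mem_filterSet_inf_comap {F : Filter ℕ} {κ : Type*} {f : ℕ → κ}
    {U : κ → Set (ℕ → Bool)} (hU : ∀ j, DependsOn (· ∈ U j) (f ⁻¹' {j})) {l : Filter κ}
    (hl : l ≤ traceFilter F U) {y : ℕ → Bool} (hy : y ∈ filterSet (F ⊓ comap f l)) :
    ∀ᶠ j in l, y ∈ U j := by
  obtain ⟨X, hX, _, ⟨J, hJ, hJf⟩, hXJ⟩ := mem_inf_iff_superset.1 hy
  filter_upwards [hJ, hl (mem_traceFilter.2 ⟨X, hX, Subset.rfl⟩)] with j hj hXU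
  -- On the `j`-th block, `X` is contained in `y`.
  refine (hU j fun i (hi : f i = j) => ?_).mp
    (hXU (mem_Ici.2 le_sup_left : X.boolIndicator ⊔ y ∈ _))
  by_cases hiX : i ∈ X
  · have hyi : y i = true := hXJ ⟨hiX, hJf (by simpa [hi] using hj)⟩
    simp [hyi]
  · simp [(notMem_iff_boolIndicator X i).1 hiX]

theorem IsSmallSet.exists_filter_le {μ : Measure (ℕ → Bool)} [NeZero μ] {F : Filter ℕ}
    (hF : F ≤ cofinite) (hsmall : IsSmallSet μ (filterSet F)) :
    ∃ G : Filter ℕ, G.NeBot ∧ G ≤ F ∧ μ (filterSet G) = 0 ∧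
      ¬ BaireMeasurableSet (filterSet G) := by
  obtain ⟨f, U, hf, hU, hsum, hFU⟩ := hsmall
  have := traceFilter_inf_neBot hU hFU
  let l := Ultrafilter.of (traceFilter F U ⊓ atTop)
  have hl : ↑l ≤ traceFilter F U ⊓ atTop := Ultrafilter.of_le _
  let G := F ⊓ comap f l
  have hnull : μ (filterSet G) = 0 := by
    refine measure_mono_null (fun y hy => ?_) (measure_setOfPred_frequently_eq_zero hsum)
    exact (eventually_mem_of_mem_filterSet_inf_comap hU (hl.trans inf_le_left) hy).frequently
      |>.filter_mono (hl.trans inf_le_right)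
  have hG : G.NeBot := ⟨fun h => NeZero.ne μ (by simpa [filterSet, h] using hnull)⟩
  exact ⟨G, hG, inf_le_left, hnull, not_baireMeasurableSet_filterSet (inf_le_left.trans hF) hf
    (tendsto_comap.mono_left inf_le_right)⟩

/-! ### Product measures -/

theorem IsBernoulli.exists_eq_infinitePi {ι : Type*} {μ : Measure (ι → Bool)} {p : ι → ℝ≥0∞}
    (hμ : IsBernoulli μ p) :
    ∃ κ : ι → Measure Bool, (∀ i, IsProbabilityMeasure (κ i)) ∧
      (∀ i b, κ i {b} = if b then p i else 1 - p i) ∧ μ = Measure.infinitePi κ := by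
  have := hμ.1
  let κ (i : ι) : Measure Bool := μ.map fun x => x i
  have hκ (i : ι) : IsProbabilityMeasure (κ i) :=
    Measure.isProbabilityMeasure_map (measurable_pi_apply i).aemeasurable
  have hsingleton (i : ι) (b : Bool) : κ i {b} = if b then p i else 1 - p i := by
    rw [Measure.map_apply (measurable_pi_apply i) (measurableSet_singleton b)]
    simpa [preimage] using hμ.2 {i} fun _ => b
  refine ⟨κ, hκ, hsingleton, IsProjectiveLimit.unique (fun s => ?_)
    (Measure.isProjectiveLimit_infinitePi κ)⟩
  refine Measure.ext_of_singleton fun t => ?_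
  rw [Measure.map_apply (by fun_prop) (measurableSet_singleton t), Measure.pi_singleton]
  classical
  have hcyl := hμ.2 s fun i => if hi : i ∈ s then t ⟨i, hi⟩ else false
  simp only [hsingleton]
  rw [← Finset.prod_coe_sort] at hcyl
  convert hcyl using 2 with i
  · ext x
    simp +contextual [funext_iff]
  · simp

section InfinitePi

variable {ι : Type*} {X : ι → Type*} [∀ i, MeasurableSpace (X i)] {κ : ∀ i, Measure (X i)}
  [∀ i, IsProbabilityMeasure (κ i)]

variable (κ) in
theorem measurePreserving_piecewise (S : Set ι) [∀ i, Decidable (i ∈ S)] :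
    MeasurePreserving (fun q : (∀ i, X i) × (∀ i, X i) => S.piecewise q.1 q.2)
      ((Measure.infinitePi κ).prod (Measure.infinitePi κ)) (Measure.infinitePi κ) := by
  have hmeas : Measurable fun q : (∀ i, X i) × (∀ i, X i) => S.piecewise q.1 q.2 :=
    measurable_pi_lambda _ fun i => by
      by_cases hi : i ∈ S <;> simp only [piecewise, hi, if_true, if_false] <;> fun_prop
  refine ⟨hmeas, Measure.eq_infinitePi κ fun s t ht => ?_⟩
  have hpre : (fun q : (∀ i, X i) × (∀ i, X i) => S.piecewise q.1 q.2) ⁻¹' (s : Set ι).pi t =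
      ((s.filter (· ∈ S) : Finset ι) : Set ι).pi t ×ˢ
        ((s.filter (· ∉ S) : Finset ι) : Set ι).pi t := by
    ext q
    simp only [mem_preimage, Set.mem_pi, mem_prod, Finset.mem_coe, Finset.mem_filter, ← forall_and]
    refine forall_congr' fun i => ?_
    by_cases hi : i ∈ S <;> simp [hi]
  rw [Measure.map_apply hmeas (MeasurableSet.pi s.countable_toSet fun i _ => ht i), hpre,
    Measure.prod_prod, Measure.infinitePi_pi κ fun i _ => ht i,
    Measure.infinitePi_pi κ fun i _ => ht i, Finset.prod_filter_mul_prod_filter_not]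

theorem infinitePi_eq_zero_or_ae_mem {E : Set (∀ i, X i)}
    (hmeas : NullMeasurableSet E (Measure.infinitePi κ))
    (hE : ∀ x y, {i | x i ≠ y i}.Finite → x ∈ E → y ∈ E) :
    Measure.infinitePi κ E = 0 ∨ ∀ᵐ x ∂Measure.infinitePi κ, x ∈ E := by
  classical
  refine or_iff_not_imp_left.2 fun h0 => ?_
  -- `E` is independent of every cylinder set, so conditioning on `E` does not change the measure.
  suffices hcond : ProbabilityTheory.cond (Measure.infinitePi κ) E = Measure.infinitePi κ by
    simpa only [hcond] using ProbabilityTheory.ae_cond_mem₀ hmeas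
  refine Measure.eq_infinitePi κ fun s t ht => ?_
  have hcyl : MeasurableSet ((s : Set ι).pi t) :=
    MeasurableSet.pi s.countable_toSet fun i _ => ht i
  have hpre : (fun q : (∀ i, X i) × (∀ i, X i) => (s : Set ι).piecewise q.1 q.2) ⁻¹'
      (E ∩ (s : Set ι).pi t) = (s : Set ι).pi t ×ˢ E := by
    ext q
    have hfin : {i | (s : Set ι).piecewise q.1 q.2 i ≠ q.2 i}.Finite :=
      s.finite_toSet.subset fun i hi => by
        by_contra his
        simp [his] at hi
    have hEq : (s : Set ι).piecewise q.1 q.2 ∈ E ↔ q.2 ∈ E :=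
      ⟨hE _ _ hfin, hE _ _ (by simpa only [ne_comm] using hfin)⟩
    have hpi : (s : Set ι).piecewise q.1 q.2 ∈ (s : Set ι).pi t ↔ q.1 ∈ (s : Set ι).pi t :=
      forall₂_congr fun i hi => by rw [piecewise_eq_of_mem _ _ _ hi]
    rw [mem_preimage, mem_inter_iff, mem_prod, hEq, hpi, and_comm]
  rw [ProbabilityTheory.cond_apply' hcyl,
    ← (measurePreserving_piecewise κ s).measure_preimage (hmeas.inter hcyl.nullMeasurableSet),
    hpre, Measure.prod_prod, mul_comm (Measure.infinitePi κ _), ← mul_assoc,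
    ENNReal.inv_mul_cancel h0 (measure_ne_top _ _), one_mul,
    Measure.infinitePi_pi κ fun i _ => ht i]

end InfinitePi

theorem exists_disjoint_coupling {κ : Measure Bool} [IsProbabilityMeasure κ]
    (hκ : κ {true} ≤ 1 / 2) :
    ∃ γ : Measure (Fin 3), IsProbabilityMeasure γ ∧ γ.map (fun a => decide (a = 0)) = κ ∧
      γ.map (fun a => decide (a = 1)) = κ := by
  set q := κ {true}
  have hq : q + q ≤ 1 := (add_le_add hκ hκ).trans_eq (ENNReal.add_halves 1)
  have hfalse : κ {false} = q + (1 - (q + q)) := by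
    have hcompl : κ {false} = 1 - q := by
      rw [← prob_compl_eq_one_sub (measurableSet_singleton true)]
      congr 1
      ext (_ | _) <;> simp
    rw [hcompl, eq_comm]
    refine ENNReal.eq_sub_of_add_eq (measure_ne_top _ _) ?_
    rw [add_right_comm, add_tsub_cancel_of_le hq]
  refine ⟨q • Measure.dirac 0 + q • Measure.dirac 1 + (1 - (q + q)) • Measure.dirac 2,
    ⟨by simp [add_tsub_cancel_of_le hq]⟩, ?_, ?_⟩ <;>
  refine Measure.ext_of_singleton fun b => ?_ <;>
  rw [Measure.map_apply .of_discrete .of_discrete] <;>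
  cases b <;> simp [Set.indicator, hfalse, q]

theorem infinitePi_filterSet_eq_zero {κ : ℕ → Measure Bool} [∀ n, IsProbabilityMeasure (κ n)]
    (hκ : ∀ n, κ n {true} ≤ 1 / 2) {F : Filter ℕ} [F.NeBot] (hF : F ≤ cofinite)
    (hmeas : NullMeasurableSet (filterSet F) (Measure.infinitePi κ)) :
    Measure.infinitePi κ (filterSet F) = 0 := by
  refine (infinitePi_eq_zero_or_ae_mem hmeas fun x y hxy hx => ?_).resolve_right fun hae => ?_
  · filter_upwards [hx, hF hxy.compl_mem_cofinite] with i hxi hi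
    rwa [← not_not.1 hi]
  choose γ hγ hγ0 hγ1 using fun n => exists_disjoint_coupling (hκ n)
  have hmap (a : Fin 3) : Measurable fun (w : ℕ → Fin 3) n => decide (w n = a) :=
    measurable_pi_lambda _ fun n =>
      (measurable_of_finite fun b : Fin 3 => decide (b = a)).comp (measurable_pi_apply n)
  have hae_map {a : Fin 3} (ha : ∀ n, (γ n).map (fun b => decide (b = a)) = κ n) :
      ∀ᵐ w ∂Measure.infinitePi γ, (fun n => decide (w n = a)) ∈ filterSet F := by
    refine ae_of_ae_map (hmap a).aemeasurable ?_
    rw [Measure.infinitePi_map_pi γ fun _ => measurable_of_finite fun b : Fin 3 => decide (b = a)]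
    simpa only [ha] using hae
  obtain ⟨w, hw0, hw1⟩ := ((hae_map hγ0).and (hae_map hγ1)).exists
  refine notMem_filterSet_of_finite hF (finite_empty.subset fun i hi => ?_)
    (inf_mem_filterSet hw0 hw1)
  obtain ⟨hi0, hi1⟩ : w i = 0 ∧ w i = 1 := by simpa using hi
  simp [hi0] at hi1

/-! ### Sections and projections -/

/-- The points `x` over which the section of `E` has measure at least `ε`, the section being taken
at the coordinates of `x` in `S`. -/
def largeSections {ι : Type*} {X : ι → Type*} [∀ i, MeasurableSpace (X i)]
    (μ : Measure (∀ i, X i)) (S : Set ι) [∀ i, Decidable (i ∈ S)] (E : Set (∀ i, X i)) (ε : ℝ≥0∞) :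
    Set (∀ i, X i) :=
  {x | ε ≤ μ {y | S.piecewise x y ∈ E}}

section Sections

variable {ι : Type*} {X : ι → Type*} (S : Set ι) [∀ i, Decidable (i ∈ S)]

theorem dependsOn_piecewise_left {β : Type*} {φ : (∀ i, X i) → β} {T : Set ι}
    (hφ : DependsOn φ T) (y : ∀ i, X i) :
    DependsOn (fun x => φ (S.piecewise x y)) (T ∩ S) := fun x x' hx => hφ fun i hi => by
  by_cases hiS : i ∈ S
  · simp [hiS, hx i ⟨hi, hiS⟩]
  · simp [hiS]

theorem dependsOn_piecewise_right {β : Type*} {φ : (∀ i, X i) → β} {T : Set ι}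
    (hφ : DependsOn φ T) (x : ∀ i, X i) :
    DependsOn (fun y => φ (S.piecewise x y)) (T \ S) := fun y y' hy => hφ fun i hi => by
  by_cases hiS : i ∈ S
  · simp [hiS]
  · simp [hiS, hy i ⟨hi, hiS⟩]

variable [∀ i, MeasurableSpace (X i)]

theorem dependsOn_largeSections {μ : Measure (∀ i, X i)} {E : Set (∀ i, X i)} {T : Set ι}
    (hE : DependsOn (· ∈ E) T) (ε : ℝ≥0∞) :
    DependsOn (· ∈ largeSections μ S E ε) (T ∩ S) := fun x x' hx => by
  have hsection (y : ∀ i, X i) : S.piecewise x y ∈ E ↔ S.piecewise x' y ∈ E :=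
    (dependsOn_piecewise_left S hE y hx).to_iff
  simp only [largeSections, mem_ofPred_eq, hsection]

theorem mul_infinitePi_largeSections_le {κ : ∀ i, Measure (X i)}
    [∀ i, IsProbabilityMeasure (κ i)] {E : Set (∀ i, X i)} (hE : MeasurableSet E) (ε : ℝ≥0∞) :
    ε * Measure.infinitePi κ (largeSections (Measure.infinitePi κ) S E ε) ≤
      Measure.infinitePi κ E := by
  have hmp := measurePreserving_piecewise κ S
  have hpre := hmp.measurable hE
  rw [← hmp.measure_preimage hE.nullMeasurableSet, Measure.prod_apply hpre]
  exact mul_meas_ge_le_lintegral (measurable_measure_prodMk_left hpre) ε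

end Sections

section Saturate

variable {ι : Type*} {X : ι → Type*}

/-- The cylinder over the projection of `E` along the coordinates in `S`: the points which can be
moved into `E` by changing only their coordinates in `S`. -/
def saturate (S : Set ι) (E : Set (∀ i, X i)) : Set (∀ i, X i) :=
  {y | ∃ x ∈ E, ∀ i ∉ S, x i = y i}

theorem subset_saturate (S : Set ι) (E : Set (∀ i, X i)) : E ⊆ saturate S E :=
  fun x hx => ⟨x, hx, fun _ _ => rfl⟩

theorem dependsOn_saturate {E : Set (∀ i, X i)} {T : Set ι} (hE : DependsOn (· ∈ E) T)
    (S : Set ι) : DependsOn (· ∈ saturate S E) (T \ S) := by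
  classical
  suffices h : ∀ y z : ∀ i, X i, (∀ i ∈ T \ S, y i = z i) → y ∈ saturate S E → z ∈ saturate S E from
    fun y z hyz => propext ⟨h y z hyz, h z y fun i hi => (hyz i hi).symm⟩
  rintro y z hyz ⟨x, hx, hxy⟩
  refine ⟨S.piecewise x z, (hE fun i hi => ?_).mp hx, fun i hi => piecewise_eq_of_notMem _ _ _ hi⟩
  by_cases hiS : i ∈ S
  · simp [hiS]
  · simp [hiS, hxy i hiS, hyz i ⟨hi, hiS⟩]

theorem saturate_subset_iUnion_updateFinset [DecidableEq ι] (S : Finset ι) (E : Set (∀ i, X i)) :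
    saturate S E ⊆ ⋃ t, {y | Function.updateFinset y S t ∈ E} := by
  rintro y ⟨x, hx, hxy⟩
  have hyx : Function.updateFinset y S (S.restrict x) = x := by
    ext i
    by_cases hi : i ∈ S <;> simp [Function.updateFinset, hi, hxy i]
  exact mem_iUnion.2 ⟨S.restrict x, by simpa [hyx]⟩

variable [∀ i, MeasurableSpace (X i)] [∀ i, MeasurableSingletonClass (X i)]

theorem measurableSet_of_dependsOn [∀ i, Countable (X i)] {S : Set ι} (hS : S.Finite)
    {E : Set (∀ i, X i)} (hE : DependsOn (· ∈ E) S) : MeasurableSet E := by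
  have := hS.to_subtype
  have hpre : S.domRestrict ⁻¹' (S.domRestrict '' E) = E :=
    subset_antisymm (fun x ⟨y, hy, hyx⟩ => (hE fun i hi => congrFun hyx ⟨i, hi⟩).mp hy)
      (subset_preimage_image _ _)
  rw [← hpre]
  exact measurable_pi_lambda _ (fun i => measurable_pi_apply _) (to_countable _).measurableSet

variable {κ : ∀ i, Measure (X i)} [∀ i, IsProbabilityMeasure (κ i)]

theorem prod_mul_infinitePi_updateFinset_le [DecidableEq ι] (S : Finset ι) (t : ∀ i : S, X i)
    (E : Set (∀ i, X i)) :
    (∏ i : S, κ i {t i}) * Measure.infinitePi κ {y | Function.updateFinset y S t ∈ E} ≤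
      Measure.infinitePi κ E := by
  have hmp := measurePreserving_piecewise κ (S : Set ι)
  have hcyl : Measure.infinitePi κ (cylinder S {t}) = ∏ i : S, κ i {t i} := by
    rw [Measure.infinitePi_cylinder κ (measurableSet_singleton t), Measure.pi_singleton]
  rw [← hcyl, ← Measure.prod_prod]
  refine (measure_mono fun q hq => ?_).trans
    ((Measure.le_map_apply hmp.measurable.aemeasurable E).trans_eq (by rw [hmp.map_eq]))
  have hq1 : S.restrict q.1 = t := hq.1
  have hqt : (S : Set ι).piecewise q.1 q.2 = Function.updateFinset q.2 S t := by
    ext i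
    by_cases hi : i ∈ S <;> simp [Function.updateFinset, ← hq1, hi]
  rw [mem_preimage, hqt]
  exact hq.2

theorem exists_infinitePi_saturate_le [∀ i, Finite (X i)] (hκ : ∀ i a, κ i {a} ≠ 0)
    (S : Finset ι) :
    ∃ c ≠ ∞, ∀ E, Measure.infinitePi κ (saturate S E) ≤ c * Measure.infinitePi κ E := by
  classical
  have := fun i => Fintype.ofFinite (X i)
  let w (t : ∀ i : S, X i) : ℝ≥0∞ := ∏ i : S, κ i {t i}
  have hw (t : ∀ i : S, X i) : w t ≠ 0 := Finset.prod_ne_zero_iff.2 fun i _ => hκ i (t i)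
  have hw' (t : ∀ i : S, X i) : w t ≠ ∞ := ENNReal.prod_ne_top fun i _ => measure_ne_top _ _
  refine ⟨∑ t, (w t)⁻¹, ENNReal.sum_ne_top.2 fun t _ => ENNReal.inv_ne_top.2 (hw t), fun E => ?_⟩
  calc Measure.infinitePi κ (saturate S E)
      ≤ ∑ t, Measure.infinitePi κ {y | Function.updateFinset y S t ∈ E} :=
        (measure_mono (saturate_subset_iUnion_updateFinset S E)).trans
          (measure_iUnion_fintype_le _ _)
    _ ≤ ∑ t, (w t)⁻¹ * Measure.infinitePi κ E := Finset.sum_le_sum fun t _ => by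
        rw [← ENNReal.div_eq_inv_mul,
          ENNReal.le_div_iff_mul_le (.inl (hw t)) (.inl (hw' t)), mul_comm]
        exact prod_mul_infinitePi_updateFinset_le S t E
    _ = (∑ t, (w t)⁻¹) * Measure.infinitePi κ E := (Finset.sum_mul ..).symm

end Saturate

/-! ### Covering null sets -/

theorem exists_strictMono_mul_le {c t ε : ℕ → ℝ≥0∞} (hc : ∀ n, c n ≠ ∞)
    (ht : Tendsto t atTop (𝓝 0)) (hε : ∀ k, 0 < ε k) :
    ∃ n : ℕ → ℕ, StrictMono n ∧ n 0 = 0 ∧ ∀ k, c (n k) * t (n (k + 1)) ≤ ε k := by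
  have hnext (k N : ℕ) : ∃ M > N, c N * t M ≤ ε k := by
    have hlim : Tendsto (fun M => c N * t M) atTop (𝓝 0) := by
      simpa using ENNReal.Tendsto.const_mul ht (.inr (hc N))
    exact ((eventually_gt_atTop N).and (hlim.eventually_le_const (hε k))).exists
  choose next hgt hle using hnext
  let n (k : ℕ) : ℕ := Nat.rec 0 next k
  exact ⟨n, strictMono_nat_of_lt_succ fun k => hgt k (n k), rfl, fun k => hle k (n k)⟩

theorem exists_block_index {n : ℕ → ℕ} (hn : StrictMono n) (h0 : n 0 = 0) :
    ∃ f : ℕ → ℕ, ∀ i k, f i < k ↔ i < n k := by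
  have hex (i : ℕ) : ∃ k, i < n (k + 1) := ⟨i, hn.le_apply.trans_lt' (Nat.lt_succ_self i)⟩
  refine ⟨fun i => Nat.find (hex i), fun i k => ?_⟩
  rw [Nat.find_lt_iff]
  refine ⟨fun ⟨m, hmk, hm⟩ => hm.trans_le (hn.monotone hmk), fun hik => ?_⟩
  obtain ⟨m, rfl⟩ := Nat.exists_eq_add_one_of_ne_zero fun hk : k = 0 => by simp [hk, h0] at hik
  exact ⟨m, m.lt_succ_self, hik⟩

section Cover

variable {X : ℕ → Type*}

/-- The points which are first seen to lie in `V` by looking at their `m` first coordinates, when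
one looks at no fewer than `j` coordinates. -/
def decidedAt (V : Set (∀ n, X n)) (j m : ℕ) : Set (∀ n, X n) :=
  {x | IsLeast {k | j ≤ k ∧ PiNat.cylinder x k ⊆ V} m}

theorem decidedAt_subset (V : Set (∀ n, X n)) (j m : ℕ) : decidedAt V j m ⊆ V :=
  fun x hx => hx.1.2 (PiNat.self_mem_cylinder x m)

theorem pairwise_disjoint_decidedAt (V : Set (∀ n, X n)) (j : ℕ) :
    Pairwise (Function.onFun Disjoint (decidedAt V j)) :=
  fun _ _ hkm => disjoint_left.2 fun _ hk hm => hkm (hk.unique hm)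

theorem dependsOn_decidedAt (V : Set (∀ n, X n)) (j m : ℕ) :
    DependsOn (· ∈ decidedAt V j m) (Iio m) := by
  suffices h : ∀ x y : ∀ n, X n, (∀ i ∈ Iio m, x i = y i) → x ∈ decidedAt V j m →
      y ∈ decidedAt V j m from
    fun x y hxy => propext ⟨h x y hxy, h y x fun i hi => (hxy i hi).symm⟩
  intro x y hxy hx
  have hcyl {k : ℕ} (hk : k ≤ m) : PiNat.cylinder x k = PiNat.cylinder y k :=
    PiNat.mem_cylinder_iff_eq.1 fun i hi => hxy i (hi.trans_le hk)
  refine ⟨⟨hx.1.1, hcyl le_rfl ▸ hx.1.2⟩, fun k hk => ?_⟩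
  by_contra! hkm
  exact hkm.not_ge (hx.2 ⟨hk.1, hcyl hkm.le ▸ hk.2⟩)

theorem exists_mem_decidedAt [∀ n, TopologicalSpace (X n)] [∀ n, DiscreteTopology (X n)]
    {V : Set (∀ n, X n)} (hV : IsOpen V) {x : ∀ n, X n} (hx : x ∈ V) (j : ℕ) :
    ∃ m ≥ j, x ∈ decidedAt V j m := by
  obtain ⟨_, ⟨z, k, rfl⟩, hxz, hzV⟩ :=
    (PiNat.isTopologicalBasis_cylinders _).mem_nhds_iff.1 (hV.mem_nhds hx)
  have hne : {k | j ≤ k ∧ PiNat.cylinder x k ⊆ V}.Nonempty :=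
    ⟨max j k, le_max_left j k, (PiNat.cylinder_anti x (le_max_right j k)).trans
      (PiNat.mem_cylinder_iff_eq.1 hxz ▸ hzV)⟩
  exact ⟨_, (Nat.sInf_mem hne).1, Nat.sInf_mem hne, fun _ => Nat.sInf_le⟩

variable [∀ n, MeasurableSpace (X n)] [∀ n, MeasurableSingletonClass (X n)]

theorem tsum_measure_decidedAt_le [∀ n, Countable (X n)] (μ : Measure (∀ n, X n))
    (V : Set (∀ n, X n)) (j : ℕ) :
    ∑' m, μ (decidedAt V j m) ≤ μ V := by
  rw [← measure_iUnion (pairwise_disjoint_decidedAt V j) fun m =>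
    measurableSet_of_dependsOn (finite_Iio m) (dependsOn_decidedAt V j m)]
  exact measure_mono (iUnion_subset (decidedAt_subset V j))

theorem exists_dependsOn_Iio_cover [∀ n, Countable (X n)] [∀ n, TopologicalSpace (X n)]
    [∀ n, DiscreteTopology (X n)] {μ : Measure (∀ n, X n)} [μ.OuterRegular]
    {A : Set (∀ n, X n)} (hA : μ A = 0) :
    ∃ C : ℕ → Set (∀ n, X n), (∀ m, DependsOn (· ∈ C m) (Iio m)) ∧ ∑' m, μ (C m) ≠ ∞ ∧
      ∀ x ∈ A, ∃ᶠ m in atTop, x ∈ C m := by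
  obtain ⟨ε, hε, hεsum⟩ := ENNReal.exists_pos_sum_of_countable' one_ne_zero ℕ
  choose V hAV hV hVε using fun j => A.exists_isOpen_lt_of_lt (μ := μ) (ε j) (hA ▸ hε j)
  refine ⟨fun m => ⋃ j, decidedAt (V j) j m,
    fun m => dependsOn_mem_iUnion fun j => dependsOn_decidedAt (V j) j m, ?_, fun x hx => ?_⟩
  · refine ne_top_of_le_ne_top (hεsum.trans ENNReal.one_lt_top).ne ?_
    calc ∑' m, μ (⋃ j, decidedAt (V j) j m)
        ≤ ∑' (m) (j), μ (decidedAt (V j) j m) := ENNReal.tsum_le_tsum fun m => measure_iUnion_le _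
      _ = ∑' (j) (m), μ (decidedAt (V j) j m) := ENNReal.tsum_comm
      _ ≤ ∑' j, ε j := ENNReal.tsum_le_tsum fun j =>
          (tsum_measure_decidedAt_le μ (V j) j).trans (hVε j).le
  · refine frequently_atTop.2 fun j => ?_
    obtain ⟨m, hjm, hm⟩ := exists_mem_decidedAt (hV j) (hAV j hx) j
    exact ⟨m, hjm, mem_iUnion.2 ⟨j, hm⟩⟩

theorem exists_dependsOn_consecutive_cover [∀ n, Finite (X n)]
    {κ : ∀ n, Measure (X n)} [∀ n, IsProbabilityMeasure (κ n)] (hκ : ∀ n a, κ n {a} ≠ 0)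
    {A : Set (∀ n, X n)} (hA : Measure.infinitePi κ A = 0) {ε : ℕ → ℝ≥0∞} (hε : ∀ k, 0 < ε k) :
    ∃ (f : ℕ → ℕ) (D : ℕ → Set (∀ n, X n)), (∀ j, (f ⁻¹' {j}).Finite) ∧
      (∀ k, DependsOn (· ∈ D k) (f ⁻¹' {k, k + 1})) ∧
      (∀ k, Measure.infinitePi κ (D k) ≤ ε k) ∧ ∀ x ∈ A, ∃ᶠ k in atTop, x ∈ D k := by
  let : ∀ n, TopologicalSpace (X n) := fun _ => ⊥
  have : ∀ n, DiscreteTopology (X n) := fun _ => ⟨rfl⟩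
  obtain ⟨C, hC, hCsum, hAC⟩ := exists_dependsOn_Iio_cover hA
  choose c hc hcsat using fun n => exists_infinitePi_saturate_le hκ (Finset.Iio n)
  obtain ⟨n, hn, hn0, hcn⟩ :=
    exists_strictMono_mul_le hc (ENNReal.tendsto_sum_nat_add _ hCsum) hε
  obtain ⟨f, hf⟩ := exists_block_index hn hn0
  -- Saturating these events makes them independent of the blocks before `k`, at the cost `c (n k)`.
  let E (k : ℕ) : Set (∀ n, X n) := ⋃ m : Ico (n (k + 1)) (n (k + 2)), C m
  refine ⟨f, fun k => saturate (Finset.Iio (n k)) (E k), fun j => ?_, fun k => ?_, fun k => ?_,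
    fun x hx => frequently_atTop.2 fun a => ?_⟩
  · exact (finite_Iio (n (j + 1))).subset fun i hi => (hf i _).1 (by simp_all)
  · have hE : DependsOn (· ∈ E k) (Iio (n (k + 2))) :=
      dependsOn_mem_iUnion fun m => (hC m).mono (Iio_subset_Iio m.2.2.le)
    refine (dependsOn_saturate hE _).mono fun i hi => ?_
    have hlt : f i < k + 2 := (hf i _).2 hi.1
    have hge : k ≤ f i := not_lt.1 fun h => hi.2 (by simpa using (hf i k).1 h)
    simp only [mem_preimage, mem_insert_iff, mem_singleton_iff]
    omega
  · have hE : E k ⊆ ⋃ m, C (m + n (k + 1)) := iUnion_subset fun m =>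
      subset_iUnion_of_subset (m - n (k + 1)) (by rw [Nat.sub_add_cancel m.2.1])
    exact (hcsat (n k) _).trans ((mul_le_mul_right
      ((measure_mono hE).trans (measure_iUnion_le _)) _).trans (hcn k))
  · obtain ⟨m, hm, hxm⟩ := frequently_atTop.1 (hAC x hx) (n (a + 1))
    have ham : a + 1 ≤ f m := not_lt.1 fun h => hm.not_gt ((hf m _).1 h)
    refine ⟨f m - 1, by omega, subset_saturate _ _ (mem_iUnion.2 ⟨⟨m, ?_, ?_⟩, hxm⟩)⟩
    · exact not_lt.1 fun h => by have := (hf m _).2 h; omega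
    · exact (hf m _).1 (by omega)

end Cover

section Blocks

variable {κ : ℕ → Measure Bool} [∀ n, IsProbabilityMeasure (κ n)]

theorem isSmallSet_of_frequently_mem_largeSections {A : Set (ℕ → Bool)} {f : ℕ → ℕ}
    (hf : ∀ j, (f ⁻¹' {j}).Finite) {D : ℕ → Set (ℕ → Bool)}
    (hD : ∀ k, DependsOn (· ∈ D k) (f ⁻¹' {k, k + 1})) {ε : ℕ → ℝ≥0∞} (hε : ∀ k, 0 < ε k)
    (hεsum : ∑' k, ε k ≠ ∞) (hDε : ∀ k, Measure.infinitePi κ (D k) ≤ ε k * ε k)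
    (hA : ∀ x ∈ A, ∃ᶠ k in atTop,
      x ∈ largeSections (Measure.infinitePi κ) {i | Even (f i)} (D k) (ε k)) :
    IsSmallSet (Measure.infinitePi κ) A := by
  -- `2 * ((k + 1) / 2)` is the even one of `k` and `k + 1`.
  refine isSmallSet_of_tendsto (e := fun k => 2 * ((k + 1) / 2)) hf
    (tendsto_atTop_mono (fun k => (by omega : k ≤ 2 * ((k + 1) / 2))) tendsto_id)
    (fun k => (dependsOn_largeSections _ (hD k) (ε k)).mono ?_)
    (ne_top_of_le_ne_top hεsum (ENNReal.tsum_le_tsum fun k => ?_)) hA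
  · rintro i ⟨hik, r, hr⟩
    simp only [mem_preimage, mem_insert_iff, mem_singleton_iff] at hik ⊢
    omega
  · have hDmeas : MeasurableSet (D k) :=
      measurableSet_of_dependsOn (Finite.preimage' (toFinite _) fun j _ => hf j) (hD k)
    exact (ENNReal.mul_le_mul_iff_right (hε k).ne' (ENNReal.ne_top_of_tsum_ne_top hεsum k)).1
      ((mul_infinitePi_largeSections_le _ hDmeas (ε k)).trans (hDε k))

theorem isSmallSet_of_eventually_notMem_largeSections {μ : Measure (ℕ → Bool)}
    {A : Set (ℕ → Bool)} {f : ℕ → ℕ} (hf : ∀ j, (f ⁻¹' {j}).Finite) {D : ℕ → Set (ℕ → Bool)}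
    (hD : ∀ k, DependsOn (· ∈ D k) (f ⁻¹' {k, k + 1})) {ε : ℕ → ℝ≥0∞}
    (hεsum : ∑' k, ε k ≠ ∞) {g : ℕ → Bool}
    (hg : ∀ᶠ k in atTop, g ∉ largeSections μ {i | Even (f i)} (D k) (ε k))
    (hA : ∀ x ∈ A, ∃ᶠ k in atTop, {i | Even (f i)}.piecewise g x ∈ D k) : IsSmallSet μ A := by
  let small (k : ℕ) : Prop := g ∉ largeSections μ {i | Even (f i)} (D k) (ε k)
  -- `2 * (k / 2) + 1` is the odd one of `k` and `k + 1`.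
  refine isSmallSet_of_tendsto (e := fun k => 2 * (k / 2) + 1)
    (U := fun k => {y | small k ∧ {i | Even (f i)}.piecewise g y ∈ D k}) hf
    (tendsto_atTop_mono (fun k => (by omega : k ≤ 2 * (k / 2) + 1)) tendsto_id)
    (fun k y y' hy => congrArg (small k ∧ ·) (dependsOn_piecewise_right _ (hD k) g fun i hi => ?_))
    (ne_top_of_le_ne_top hεsum (ENNReal.tsum_le_tsum fun k => ?_)) fun x hx => ?_
  · obtain ⟨hik, hi⟩ := hi
    refine hy i ?_
    simp only [mem_preimage, mem_insert_iff, mem_singleton_iff, mem_ofPred_eq,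
      Nat.even_iff] at hik hi ⊢
    omega
  · by_cases hk : small k
    · simpa [hk] using (not_le.1 hk).le
    · simp [hk]
  · exact ((hA x hx).and_eventually hg).mono fun k hk => ⟨hk.2, hk.1⟩

theorem isSmallSet_filterSet_of_infinitePi_eq_zero (hκ : ∀ n b, κ n {b} ≠ 0) {F : Filter ℕ}
    (hF : Measure.infinitePi κ (filterSet F) = 0) :
    IsSmallSet (Measure.infinitePi κ) (filterSet F) := by
  obtain ⟨ε, hε, hεsum⟩ := ENNReal.exists_pos_sum_of_countable' one_ne_zero ℕ
  have hεtop : ∑' k, ε k ≠ ∞ := (hεsum.trans ENNReal.one_lt_top).ne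
  obtain ⟨f, D, hf, hD, hDε, hFD⟩ :=
    exists_dependsOn_consecutive_cover hκ hF fun k => ENNReal.mul_pos (hε k).ne' (hε k).ne'
  by_cases h : ∀ x ∈ filterSet F, ∃ᶠ k in atTop,
      x ∈ largeSections (Measure.infinitePi κ) {i | Even (f i)} (D k) (ε k)
  · exact isSmallSet_of_frequently_mem_largeSections hf hD hε hεtop hDε h
  push Not at h
  obtain ⟨g, hgF, hg⟩ := h
  refine isSmallSet_of_eventually_notMem_largeSections hf hD hεtop hg fun x hx => hFD _ ?_
  exact isUpperSet_filterSet F (le_piecewise (fun _ _ => inf_le_left) fun _ _ => inf_le_right)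
    (inf_mem_filterSet hgF hx)

end Blocks

theorem extend_to_measurable_without_baire (μ : Measure (ℕ → Bool)) (p : ℕ → ℝ≥0∞)
    (hp : ∀ n, 0 < p n ∧ p n ≤ 1 / 2) (hμ : IsBernoulli μ p)
    (F : Filter ℕ) [F.NeBot] (hF : F ≤ Filter.cofinite)
    (hmeas : NullMeasurableSet (filterSet F) μ) :
    ∃ G : Filter ℕ, G.NeBot ∧ G ≤ F ∧ NullMeasurableSet (filterSet G) μ ∧
      ¬ BaireMeasurableSet (filterSet G) := by
  obtain ⟨κ, _, hκ, rfl⟩ := hμ.exists_eq_infinitePi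
  have hκ0 (n : ℕ) (b : Bool) : κ n {b} ≠ 0 := by
    have hp1 : p n < 1 := (hp n).2.trans_lt (by simp)
    cases b <;> simp [hκ, (hp n).1.ne', hp1, tsub_eq_zero_iff_le]
  have hnull : Measure.infinitePi κ (filterSet F) = 0 :=
    infinitePi_filterSet_eq_zero (fun n => by simpa [hκ] using (hp n).2) hF hmeas
  obtain ⟨G, hG, hGF, hGnull, hGBaire⟩ :=
    (isSmallSet_filterSet_of_infinitePi_eq_zero hκ0 hnull).exists_filter_le hF
  exact ⟨G, hG, hGF, .of_null hGnull, hGBaire⟩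
end
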